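/- For every real number α > 0, the class K_α^+ of strictly hereditarily α-sparse finite graphs is indivisible if and only if α ≥ 2. -/

import Mathlib

open SimpleGraph

/-- `δ_α(G) = |V(G)| − α·e(G)`, where `e(G)` is the number of edges of `G`. -/
noncomputable def deltaAlpha (α : ℝ) {V : Type} (G : SimpleGraph V) : ℝ :=
  (Nat.card V : ℝ) - α * (Nat.card G.edgeSet : ℝ)

/-- `G ∈ K_α^+`: `δ_α(H) > 0` for every non-empty induced subgraph `H` of `G`. -/
def MemKalphaPlus (α : ℝ) {V : Type} (G : SimpleGraph V) : Prop :=
  ∀ s : Set V, s.Nonempty → 0 < deltaAlpha α (G.induce s)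

/-- A class of finite simple graphs (indexed by the number of vertices) is indivisible. -/
def Indivisible (K : ∀ n : ℕ, SimpleGraph (Fin n) → Prop) : Prop :=
  ∀ (n : ℕ) (A : SimpleGraph (Fin n)), K n A → ∀ k : ℕ, 0 < k →
    ∃ (m : ℕ) (B : SimpleGraph (Fin m)), K m B ∧
      ∀ c : Fin m → Fin k, ∃ f : A ↪g B, ∀ x y, c (f x) = c (f y)

/-- A nonempty set of vertices in a graph of `K_α^+` spans a vertex of degree less than `k`,
as soon as `2 ≤ α * k`. -/
lemma MemKalphaPlus.exists_degree_induce_lt {α : ℝ} {V : Type} [Finite V]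
    {G : SimpleGraph V} (hα : 0 < α) (hG : MemKalphaPlus α G) {k : ℕ} (hk : 2 ≤ α * k) {s : Set V}
    (hs : s.Nonempty) : ∃ v : s, ((G.induce s).neighborSet v).ncard < k := by
  classical
  have := Fintype.ofFinite V
  by_contra! h
  have hpos := hG s hs
  have hsum := (G.induce s).sum_degrees_eq_twice_card_edges
  have hle : Fintype.card s * k ≤ ∑ v, (G.induce s).degree v := by
    rw [← smul_eq_mul, ← Finset.card_univ]
    refine Finset.card_nsmul_le_sum _ _ _ fun v _ => ?_
    simpa [← SimpleGraph.card_neighborSet_eq_degree, Set.ncard_eq_toFinset_card'] using h v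
  rw [hsum, SimpleGraph.edgeFinset_card] at hle
  rw [deltaAlpha, Nat.card_eq_fintype_card, Nat.card_eq_fintype_card] at hpos
  have hle' : (Fintype.card s : ℝ) * k ≤ 2 * Fintype.card (G.induce s).edgeSet := by
    exact_mod_cast hle
  nlinarith [mul_le_mul_of_nonneg_left hle' hα.le,
    mul_le_mul_of_nonneg_left hk (Nat.cast_nonneg (α := ℝ) (Fintype.card s))]

/-- Graphs in `K_α^+` are `k`-colorable as soon as `2 ≤ α * k`. -/
lemma MemKalphaPlus.colorable {α : ℝ} {V : Type} [Finite V] {G : SimpleGraph V} (hα : 0 < α)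
    (hG : MemKalphaPlus α G) {k : ℕ} (hk : 2 ≤ α * k) : G.Colorable k := by
  classical
  have hk0 : 0 < k := by
    rcases Nat.eq_zero_or_pos k with rfl | h
    · norm_num at hk
    · exact h
  have := Fintype.ofFinite V
  suffices H : ∀ (n : ℕ) (s : Finset V), s.card = n →
      ∃ c : V → Fin k, ∀ u ∈ s, ∀ w ∈ s, G.Adj u w → c u ≠ c w by
    obtain ⟨c, hc⟩ := H _ Finset.univ rfl
    exact ⟨Coloring.mk c fun {u w} h => hc u (Finset.mem_univ _) w (Finset.mem_univ _) h⟩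
  intro n
  induction n with
  | zero =>
    intro s hs
    rw [Finset.card_eq_zero] at hs
    subst hs
    exact ⟨fun _ => ⟨0, hk0⟩, by simp⟩
  | succ n ih =>
    intro s hs
    have hne : (s : Set V).Nonempty := by
      rw [Finset.coe_nonempty, ← Finset.card_pos]
      omega
    obtain ⟨⟨v, hv⟩, hdeg⟩ := hG.exists_degree_induce_lt hα hk hne
    have hvs : v ∈ s := hv
    obtain ⟨c, hc⟩ := ih (s.erase v) (by rw [Finset.card_erase_of_mem hvs]; omega)
    obtain ⟨i, hi⟩ : ∃ i : Fin k,
        i ∉ (fun w : (s : Set V) => c w) '' (G.induce (s : Set V)).neighborSet ⟨v, hv⟩ := by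
      by_contra! h
      have := Set.ncard_image_le (f := fun w : (s : Set V) => c w)
        (Set.toFinite ((G.induce (s : Set V)).neighborSet ⟨v, hv⟩))
      rw [Set.eq_univ_of_forall h, Set.ncard_univ, Nat.card_fin] at this
      omega
    have hi' : ∀ w ∈ s, G.Adj v w → c w ≠ i := fun w hw hvw hwi => hi ⟨⟨w, hw⟩, hvw, hwi⟩
    refine ⟨Function.update c v i, fun u hu w hw huw => ?_⟩
    by_cases huv : u = v
    · subst huv
      rw [Function.update_self, Function.update_of_ne huw.ne']
      exact (hi' w hw huw).symm
    · rw [Function.update_of_ne huv]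
      by_cases hwv : w = v
      · subst hwv
        rw [Function.update_self]
        exact hi' u hu huw.symm
      · rw [Function.update_of_ne hwv]
        exact hc u (Finset.mem_erase.2 ⟨huv, hu⟩) w (Finset.mem_erase.2 ⟨hwv, hw⟩) huw

lemma memKalphaPlus_top_fin_two {α : ℝ} (hα : 0 < α) (hα2 : α < 2) :
    MemKalphaPlus α (⊤ : SimpleGraph (Fin 2)) := by
  classical
  intro s hs
  have hle := ((⊤ : SimpleGraph (Fin 2)).induce s).card_edgeFinset_le_card_choose_two
  rw [SimpleGraph.edgeFinset_card] at hle
  rw [deltaAlpha, Nat.card_eq_fintype_card, Nat.card_eq_fintype_card]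
  have hpos : 0 < Fintype.card s := Fintype.card_pos_iff.2 hs.to_subtype
  have hcard : Fintype.card s ≤ 2 := by
    simpa using Fintype.card_subtype_le (· ∈ s)
  generalize Fintype.card s = m at *
  generalize Fintype.card ((⊤ : SimpleGraph (Fin 2)).induce s).edgeSet = e at *
  interval_cases m
  · have : e = 0 := by simpa using hle
    simp [this]
  · have : (e : ℝ) ≤ 1 := by exact_mod_cast (by simpa using hle : e ≤ 1)
    push_cast
    nlinarith

lemma memKalphaPlus_bot (α : ℝ) {V : Type} [Finite V] :
    MemKalphaPlus α (⊥ : SimpleGraph V) := by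
  intro s hs
  have hbot : (⊥ : SimpleGraph V).induce s = ⊥ := by ext; simp
  simpa [deltaAlpha, hbot] using (Set.ncard_pos s.toFinite).2 hs

/-- For `2 ≤ α` the only graphs in `K_α^+` are the edgeless ones. -/
lemma MemKalphaPlus.eq_bot {α : ℝ} (hα : 2 ≤ α) {V : Type} [Finite V] {G : SimpleGraph V}
    (hG : MemKalphaPlus α G) : G = ⊥ := by
  classical
  refine SimpleGraph.eq_bot_iff_forall_not_adj.2 fun u v huv => ?_
  have hpos := hG {u, v} ⟨u, by simp⟩
  have hE : 1 ≤ Nat.card (G.induce {u, v}).edgeSet := by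
    refine Nat.card_pos_iff.2 ⟨⟨⟨s(⟨u, by simp⟩, ⟨v, by simp⟩), ?_⟩⟩, inferInstance⟩
    simpa using huv
  have hE' : (1 : ℝ) ≤ Nat.card (G.induce {u, v}).edgeSet := by exact_mod_cast hE
  rw [deltaAlpha, Nat.card_coe_set_eq, Set.ncard_pair huv.ne] at hpos
  push_cast at hpos
  nlinarith

theorem kalphaPlus_indivisible_iff (α : ℝ) (hα : 0 < α) :
    Indivisible (fun n (G : SimpleGraph (Fin n)) => MemKalphaPlus α G) ↔ 2 ≤ α := by
  constructor
  · intro h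
    by_contra! hα2
    obtain ⟨k, hk⟩ := exists_nat_ge (2 / α)
    rw [div_le_iff₀' hα] at hk
    have hk0 : 0 < k := by
      rcases Nat.eq_zero_or_pos k with rfl | h
      · norm_num at hk
      · exact h
    obtain ⟨m, B, hB, hc⟩ := h 2 ⊤ (memKalphaPlus_top_fin_two hα hα2) k hk0
    obtain ⟨C⟩ := MemKalphaPlus.colorable hα hB hk
    obtain ⟨f, hf⟩ := hc C
    have hadj : B.Adj (f 0) (f 1) := f.map_rel_iff.2 (by simp)
    exact C.valid hadj (hf 0 1)
  · intro hα2 n A hA k hk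
    obtain rfl := MemKalphaPlus.eq_bot hα2 hA
    refine ⟨k * n, ⊥, memKalphaPlus_bot α, fun c => ?_⟩
    have : Nonempty (Fin k) := ⟨⟨0, hk⟩⟩
    obtain ⟨i, hi⟩ := Fintype.exists_le_card_fiber_of_mul_le_card c (n := n) (by simp)
    obtain ⟨t, ht, htn⟩ := Finset.exists_subset_card_eq hi
    let e := t.orderEmbOfFin htn
    have he : ∀ x, c (e x) = i := fun x =>
      (Finset.mem_filter.1 (ht (t.orderEmbOfFin_mem htn x))).2
    exact ⟨⟨e.toEmbedding, by simp⟩, fun x y => (he x).trans (he y).symm⟩
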